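/- There exists β₀ > 2 such that for every β > β₀ there is a constant L = L(β) with the following property: for every m ∈ ℕ there exists an L-bi-Lipschitz homeomorphism F̂ : R_{m,13} → R_{m,13} such that (i) F̂(x) = x for every x ∈ ∂R_{m,13}; (ii) F̂(x₁,x₂,x₃,x₄) = (x₁,x₂,x₃,−x₄) for every x ∈ K_{B,m} ∩ ([−2m−3,2m+3]^3 × [−3,3]); (iii) F̂(x + n) = F̂(x) + n for every x ∈ Q(0,1) and every n = (2n₁,2n₂,2n₃,0) with n₁,n₂,n₃ ∈ {−m,…,m}; (iv) for every such n, D₄F̂(x + n) = −e₄ for almost every x ∈ U_2^3 × ([−3,3] \ [−1,1]), and D₁F̂(x + (0,2n₂,2n₃,0)) = e₁ for almost every x ∈ ([−2m−3,−2m−1] ∪ [2m+1,2m+3]) × U_1^3, with the analogous identities in the second and third coordinates. -/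

import Mathlib

noncomputable section
open MeasureTheory Set Filter

/-- `ℝ⁴` as Euclidean space. -/
abbrev E4 : Type := EuclideanSpace ℝ (Fin 4)

/-- The open cube `Q(0,1) = (-1,1)⁴`. -/
def unitCubeO : Set E4 := {x | ∀ i, x i ∈ Set.Ioo (-1 : ℝ) 1}

/-- The box `R_{m,t} = [-2m-5, 2m+5]³ × [-1-t, 1+t]`. -/
def Rbox (m : ℕ) (t : ℝ) : Set E4 :=
  {x | |x 0| ≤ 2 * (m : ℝ) + 5 ∧ |x 1| ≤ 2 * (m : ℝ) + 5 ∧ |x 2| ≤ 2 * (m : ℝ) + 5 ∧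
    |x 3| ≤ 1 + t}

/-- The sequence `r_k = 2^{-k(β+1)}` defining the thin Cantor-type set `C_B`. -/
def rB (β : ℝ) (k : ℕ) : ℝ := (2 : ℝ) ^ (-(β + 1) * (k : ℝ))

/-- One-dimensional `k`-th generation `U_k^1 ⊆ ℝ` of the Cantor-type construction
for a sequence `s`. -/
def cantorU1 (s : ℕ → ℝ) (k : ℕ) : Set ℝ :=
  ⋃ (w : Fin k → ℝ) (_ : ∀ j, w j = 1 ∨ w j = -1),
    {t | |t - 2⁻¹ * ∑ j : Fin k, s j.1 * w j| < s k}

/-- One-dimensional Cantor-type set `C(1) ⊆ ℝ` for a sequence `s`. -/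
def cantorTypeSet1 (s : ℕ → ℝ) : Set ℝ :=
  ⋂ (k : ℕ) (_ : 1 ≤ k), cantorU1 s k

/-- The translation vector `(2n₁, 2n₂, 2n₃, 0)`. -/
def tr (n₁ n₂ n₃ : ℤ) : E4 :=
  (2 * (n₁ : ℝ)) • EuclideanSpace.single 0 (1 : ℝ) +
  (2 * (n₂ : ℝ)) • EuclideanSpace.single 1 (1 : ℝ) +
  (2 * (n₃ : ℝ)) • EuclideanSpace.single 2 (1 : ℝ)

/-- `K_{B,m}`: all lines parallel to the coordinate axes through the translated
copies of the Cantor set `C_B(4)` (the latter being the product of four copies of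
its one-dimensional version). -/
def KBm (β : ℝ) (m : ℕ) : Set E4 :=
  {x | ∃ n₁ n₂ n₃ : ℤ, |n₁| ≤ (m : ℤ) ∧ |n₂| ≤ (m : ℤ) ∧ |n₃| ≤ (m : ℤ) ∧
    ∃ (c : E4) (i : Fin 4) (t : ℝ),
      (∀ j, c j ∈ cantorTypeSet1 (rB β)) ∧
      x = c + tr n₁ n₂ n₃ + t • EuclideanSpace.single i (1 : ℝ)}

/-- The reflection `(x₁,x₂,x₃,x₄) ↦ (x₁,x₂,x₃,−x₄)`. -/
def reflect (x : E4) : E4 := x - (2 * x 3) • EuclideanSpace.single 3 (1 : ℝ)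

/-! ### The Cantor set -/

/-- The one-dimensional Cantor set with ratio `q`. -/
def CC (q : ℝ) : Set ℝ := cantorTypeSet1 (fun k => q ^ k)

lemma rB_eq (β : ℝ) : rB β = fun k => ((2 : ℝ) ^ (-(β + 1))) ^ k := by
  funext k
  unfold rB
  rw [Real.rpow_mul (by norm_num), Real.rpow_natCast]

lemma word_of_mem {q x : ℝ} {N : ℕ} (hx : x ∈ cantorU1 (fun k => q ^ k) N) :
    ∃ w : ℕ → ℝ, (∀ j, w j = 1 ∨ w j = -1) ∧
      |x - 2⁻¹ * ∑ j ∈ Finset.range N, q ^ j * w j| < q ^ N := by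
  simp only [cantorU1, Set.mem_iUnion, Set.mem_ofPred_eq] at hx
  obtain ⟨w, hw, h⟩ := hx
  refine ⟨fun j => if hj : j < N then w ⟨j, hj⟩ else 1, ?_, ?_⟩
  · intro j
    by_cases hj : j < N
    · simp only [hj, dif_pos]; exact hw _
    · simp [hj]
  · rw [Finset.sum_range]
    simpa using h

lemma mem_of_word {q x : ℝ} {N : ℕ} (w : ℕ → ℝ) (hw : ∀ j, w j = 1 ∨ w j = -1)
    (h : |x - 2⁻¹ * ∑ j ∈ Finset.range N, q ^ j * w j| < q ^ N) :
    x ∈ cantorU1 (fun k => q ^ k) N := by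
  simp only [cantorU1, Set.mem_iUnion, Set.mem_ofPred_eq]
  refine ⟨fun j => w j, fun j => hw _, ?_⟩
  rw [Finset.sum_range] at h
  exact h

lemma U1_bound {q x : ℝ} (hq1 : q < 1 / 2 ^ 21) (hx : x ∈ cantorU1 (fun k => q ^ k) 1) :
    |x| ≤ 51 / 100 := by
  obtain ⟨w, hw, h⟩ := word_of_mem hx
  simp at h
  rw [abs_lt] at h
  rw [abs_le]
  rcases hw 0 with h0 | h0 <;> rw [h0] at h <;> constructor <;> linarith [h.1, h.2]

lemma U2_bound {q x : ℝ} (hq0 : 0 < q) (hq1 : q < 1 / 2 ^ 21)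
    (hx : x ∈ cantorU1 (fun k => q ^ k) 2) :
    |x| ≤ 51 / 100 := by
  obtain ⟨w, hw, h⟩ := word_of_mem hx
  simp [Finset.sum_range_succ] at h
  rw [abs_lt] at h
  rw [abs_le]
  have : q ^ 2 < q := by nlinarith
  rcases hw 0 with h0 | h0 <;> rcases hw 1 with h1 | h1 <;> rw [h0, h1] at h <;>
    constructor <;> linarith [h.1, h.2]

lemma CC_bound {q x : ℝ} (hq1 : q < 1 / 2 ^ 21) (hx : x ∈ CC q) :
    |x| ≤ 51 / 100 := by
  simp only [CC, cantorTypeSet1, Set.mem_iInter] at hx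
  exact U1_bound hq1 (hx 1 le_rfl)

lemma tail_sum {q : ℝ} (hq0 : 0 < q) (hq1 : q < 1 / 2 ^ 21) (e : ℕ → ℝ) (he : ∀ j, |e j| ≤ 2)
    (n : ℕ) : |∑ j ∈ Finset.range n, q ^ j * e j| ≤ 4 := by
  have hgeo : ∑ j ∈ Finset.range n, q ^ j ≤ 2 := by
    have h1 := geom_sum_mul_neg q n
    have h2 : 0 < q ^ n := by positivity
    nlinarith
  calc |∑ j ∈ Finset.range n, q ^ j * e j| ≤ ∑ j ∈ Finset.range n, |q ^ j * e j| :=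
        Finset.abs_sum_le_sum_abs _ _
    _ ≤ ∑ j ∈ Finset.range n, q ^ j * 2 := by
        apply Finset.sum_le_sum
        intro j _
        rw [abs_mul, abs_of_pos (by positivity : 0 < q ^ j)]
        gcongr
        exact he j
    _ ≤ 4 := by rw [← Finset.sum_mul]; linarith

/-- Differences of points in the Cantor set are lacunary. -/
lemma lac {q x y : ℝ} (hq0 : 0 < q) (hq1 : q < 1 / 2 ^ 21) (hx : x ∈ CC q) (hy : y ∈ CC q)
    (hxy : x - y ≠ 0) : ∃ k : ℕ, |(|x - y| - q ^ k)| ≤ 4 * q * q ^ k := by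
  have hpos : 0 < |x - y| / 2 := by have := abs_pos.mpr hxy; linarith
  obtain ⟨N, hN⟩ := exists_pow_lt_of_lt_one hpos (show q < 1 by linarith)
  have hN1 : q ^ (N + 1) < |x - y| / 2 := by
    refine lt_of_le_of_lt ?_ hN
    exact pow_le_pow_of_le_one hq0.le (by linarith) (by omega)
  simp only [CC, cantorTypeSet1, Set.mem_iInter] at hx hy
  obtain ⟨w, hw, hxw⟩ := word_of_mem (hx (N + 1) (by omega))
  obtain ⟨u, hu, hyu⟩ := word_of_mem (hy (N + 1) (by omega))
  set M := N + 1 with hM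
  clear_value M
  have hdiff : |x - y - 2⁻¹ * ∑ j ∈ Finset.range M, q ^ j * (w j - u j)| < 2 * q ^ M := by
    have : ∑ j ∈ Finset.range M, q ^ j * (w j - u j) =
      ∑ j ∈ Finset.range M, q ^ j * w j - ∑ j ∈ Finset.range M, q ^ j * u j := by
      rw [← Finset.sum_sub_distrib]; simp only [mul_sub]
    rw [this]
    rw [abs_lt] at *
    constructor <;> linarith [hxw.1, hxw.2, hyu.1, hyu.2]
  have hex : ∃ j, j < M ∧ w j ≠ u j := by
    by_contra! hcon
    have : ∑ j ∈ Finset.range M, q ^ j * (w j - u j) = 0 := by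
      apply Finset.sum_eq_zero
      intro j hj
      rw [hcon j (Finset.mem_range.mp hj)]; ring
    rw [this] at hdiff
    simp at hdiff
    linarith
  classical
  obtain ⟨hk1, hk2⟩ := Nat.find_spec hex
  have hmin : ∀ j, j < Nat.find hex → w j = u j := by
    intro j hj
    have := Nat.find_min hex hj
    by_contra hne
    exact this ⟨by omega, hne⟩
  set k := Nat.find hex
  clear_value k
  obtain ⟨l, rfl⟩ : ∃ l, M = k + 1 + l := ⟨M - (k + 1), by omega⟩
  refine ⟨k, ?_⟩
  have hsum : ∑ j ∈ Finset.range (k + 1 + l), q ^ j * (w j - u j) =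
      q ^ k * (w k - u k) + q ^ (k + 1) *
        ∑ j ∈ Finset.range l, q ^ j * (w (k + 1 + j) - u (k + 1 + j)) := by
    rw [Finset.sum_range_add, Finset.sum_range_succ, Finset.sum_eq_zero, Finset.mul_sum]
    · rw [zero_add]
      congr 1
      apply Finset.sum_congr rfl
      intro j _
      rw [pow_add]; ring
    · intro j hj
      rw [hmin j (Finset.mem_range.mp hj)]; ring
  have htail := tail_sum hq0 hq1 (fun j => w (k + 1 + j) - u (k + 1 + j)) (by
    intro j
    rcases hw (k + 1 + j) with h | h <;> rcases hu (k + 1 + j) with h' | h' <;>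
      simp only [h, h'] <;> norm_num) l
  rw [hsum] at hdiff
  set S := ∑ j ∈ Finset.range l, q ^ j * (w (k + 1 + j) - u (k + 1 + j))
  have hpk : 0 < q ^ k := by positivity
  have hqM : q ^ (k + 1 + l) ≤ q * q ^ k := by
    rw [← pow_succ']
    exact pow_le_pow_of_le_one hq0.le (by linarith) (by omega)
  have hS : |q ^ (k + 1) * S| ≤ 4 * (q * q ^ k) := by
    rw [abs_mul, abs_of_pos (by positivity : 0 < q ^ (k + 1)), pow_succ']
    nlinarith [mul_pos hq0 hpk]
  have hqk : q * q ^ k < q ^ k / 2 ^ 21 := by nlinarith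
  rw [abs_lt] at hdiff
  rw [abs_le] at hS
  rcases hw k with h | h <;> rcases hu k with h' | h'
  · exact absurd (h.trans h'.symm) hk2
  · rw [h, h'] at hdiff
    have : 0 < x - y := by linarith [hdiff.1, hS.1]
    rw [abs_of_pos this, abs_le]
    constructor <;> linarith [hdiff.1, hS.1, hdiff.2, hS.2]
  · rw [h, h'] at hdiff
    have : x - y < 0 := by linarith [hdiff.2, hS.2]
    rw [abs_of_neg this, abs_le]
    constructor <;> linarith [hdiff.1, hS.1, hdiff.2, hS.2]
  · exact absurd (h.trans h'.symm) hk2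

/-- Points in the second generation are close to the Cantor set. -/
lemma near_CC {q x : ℝ} (hq0 : 0 < q) (hq1 : q < 1 / 2 ^ 21)
    (hx : x ∈ cantorU1 (fun k => q ^ k) 2) : ∃ c ∈ CC q, |x - c| ≤ 2 * q ^ 2 := by
  obtain ⟨w, hw, h⟩ := word_of_mem hx
  have hq1' : 0 < 1 - q := by linarith
  have hdiv : q ^ 2 / (1 - q) < 2 * q ^ 2 := by
    rw [div_lt_iff₀ hq1']; nlinarith [pow_pos hq0 2]
  have hdivpos : 0 < q ^ 2 / (1 - q) := by positivity
  refine ⟨2⁻¹ * (w 0 + q * w 1 + q ^ 2 / (1 - q)), ?_, ?_⟩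
  · simp only [CC, cantorTypeSet1, Set.mem_iInter]
    intro k hk
    refine mem_of_word (fun j => if j < 2 then w j else 1) ?_ ?_
    · intro j
      by_cases hj : j < 2
      · simp only [hj, if_true]; exact hw j
      · simp [hj]
    · rcases Nat.lt_or_ge k 2 with hk2 | hk2
      · obtain rfl : k = 1 := by omega
        simp
        have : q ^ 2 < q / 2 := by nlinarith
        rw [abs_lt]
        rcases hw 1 with h1 | h1 <;> rw [h1] <;> constructor <;> linarith
      · obtain ⟨l, rfl⟩ : ∃ l, k = 2 + l := ⟨k - 2, by omega⟩
        rw [Finset.sum_range_add]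
        have h2 : ∑ x ∈ Finset.range l, q ^ (2 + x) * (if 2 + x < 2 then w (2 + x) else 1) =
            q ^ 2 / (1 - q) - q ^ (2 + l) / (1 - q) := by
          have h1 := geom_sum_mul_neg q l
          have : ∑ x ∈ Finset.range l, q ^ (2 + x) * (if 2 + x < 2 then w (2 + x) else 1) =
            q ^ 2 * ∑ x ∈ Finset.range l, q ^ x := by
            rw [Finset.mul_sum]
            apply Finset.sum_congr rfl
            intro j _
            rw [if_neg (by omega), pow_add, mul_one]
          rw [this]
          field_simp
          rw [mul_assoc, h1]; ring
        rw [h2]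
        simp [Finset.sum_range_succ]
        have hp : 0 < q ^ (2 + l) := by positivity
        have e : 2⁻¹ * (w 0 + q * w 1 + q ^ 2 / (1 - q)) -
          2⁻¹ * (w 0 + q * w 1 + (q ^ 2 / (1 - q) - q ^ (2 + l) / (1 - q))) =
            2⁻¹ * (q ^ (2 + l) / (1 - q)) := by ring
        rw [e, abs_of_pos (by positivity)]
        have : q ^ (2 + l) / (1 - q) < 2 * q ^ (2 + l) := by
          rw [div_lt_iff₀ hq1']; nlinarith
        linarith
  · simp [Finset.sum_range_succ] at h
    rw [abs_lt] at h
    rw [abs_le]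
    constructor <;> linarith [h.1, h.2]

/-! ### The grid of lines and the separation property -/

/-- `ℝ⁴` as `ℝ³ × ℝ` with the sup norm. -/
abbrev VV : Type := (Fin 3 → ℝ) × ℝ

/-- The generic direction of projection. -/
def aV : Fin 3 → ℝ := ![1 / 1024, 1 / 512, 1 / 256]

lemma aV_pos (j : Fin 3) : 1 / 1024 ≤ aV j := by
  fin_cases j <;> simp [aV] <;> norm_num

lemma aV_le (j : Fin 3) : aV j ≤ 1 / 256 := by
  fin_cases j <;> simp [aV] <;> norm_num

/-- The linear projection along `(a, 1)`. -/
def PV (z : VV) : Fin 3 → ℝ := z.1 - z.2 • aV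

/-- Lines parallel to the axes through the Cantor set. -/
def K0 (q : ℝ) : Set VV :=
  {z | (∀ j, z.1 j ∈ CC q) ∨ (∃ i, (∀ j, j ≠ i → z.1 j ∈ CC q) ∧ z.2 ∈ CC q)}

lemma pair {q A B x y x' y' s : ℝ} (hq0 : 0 < q) (hq1 : q < 1 / 2 ^ 21)
    (hx : x ∈ CC q) (hy : y ∈ CC q) (hx' : x' ∈ CC q) (hy' : y' ∈ CC q)
    (hA : 1 / 1024 ≤ A) (hAB : A ≤ B / 2) (hB : B ≤ 1)
    (h1 : |x - y - A * s| ≤ 1 / 2 ^ 14 * |s|) (h2 : |x' - y' - B * s| ≤ 1 / 2 ^ 14 * |s|) :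
    s = 0 := by
  by_contra hs
  have hs0 : 0 < |s| := abs_pos.mpr hs
  have key : ∀ (d D : ℝ), 1 / 1024 ≤ D → |d - D * s| ≤ 1 / 2 ^ 14 * |s| →
      15 / 16 * (D * |s|) ≤ |d| ∧ |d| ≤ 17 / 16 * (D * |s|) := by
    intro d D hD h
    have h3 : |D * s| = D * |s| := by rw [abs_mul, abs_of_pos (by linarith)]
    have h4 : |s| / 1024 ≤ D * |s| := by nlinarith
    have h5 := abs_sub_abs_le_abs_sub d (D * s)
    have h6 := abs_sub_abs_le_abs_sub (D * s) d
    rw [abs_sub_comm (D * s) d] at h6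
    rw [h3] at h5 h6
    constructor <;> linarith
  obtain ⟨k1, k2⟩ := key _ _ hA h1
  obtain ⟨l1, l2⟩ := key _ _ (by linarith) h2
  have hAs : |s| / 1024 ≤ A * |s| := by nlinarith
  have hABs : A * |s| ≤ B * |s| / 2 := by nlinarith
  have hBs : B * |s| ≤ |s| := by nlinarith
  have hd : x - y ≠ 0 := by intro h; rw [h, abs_zero] at k1; linarith
  have hd' : x' - y' ≠ 0 := by intro h; rw [h, abs_zero] at l1; linarith
  obtain ⟨m, hm⟩ := lac hq0 hq1 hx hy hd
  obtain ⟨n, hn⟩ := lac hq0 hq1 hx' hy' hd'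
  have pm : 0 < q ^ m := by positivity
  have pn : 0 < q ^ n := by positivity
  have e1 : 4 * q * q ^ m ≤ q ^ m / 2 ^ 19 := by nlinarith
  have e2 : 4 * q * q ^ n ≤ q ^ n / 2 ^ 19 := by nlinarith
  rw [abs_le] at hm hn
  rcases le_or_gt m n with hmn | hmn
  · have : q ^ n ≤ q ^ m := pow_le_pow_of_le_one hq0.le (by linarith) hmn
    linarith [hm.1, hn.2]
  · have : q ^ m ≤ q ^ (n + 1) := pow_le_pow_of_le_one hq0.le (by linarith) hmn
    have h7 : q ^ (n + 1) ≤ q ^ n / 2 ^ 21 := by rw [pow_succ]; nlinarith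
    linarith [hm.2, hn.1]

lemma aV_pair {k l : Fin 3} (h : k < l) : aV k ≤ aV l / 2 := by
  fin_cases k <;> fin_cases l <;> simp [aV] at h ⊢ <;> norm_num

lemma sep_aux {q : ℝ} (hq0 : 0 < q) (hq1 : q < 1 / 2 ^ 21) {x z : VV}
    (hx : x ∈ K0 q) (hz : z ∈ K0 q)
    (h : ∀ j, |x.1 j - z.1 j - aV j * (x.2 - z.2)| ≤ 1 / 2 ^ 14 * |x.2 - z.2|) :
    x.2 - z.2 = 0 := by
  -- two of the first three coordinates
  have two : ∀ k l : Fin 3, k ≠ l → x.1 k ∈ CC q → z.1 k ∈ CC q → x.1 l ∈ CC q →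
      z.1 l ∈ CC q → x.2 - z.2 = 0 := by
    intro k l hkl a b c d
    rcases lt_or_gt_of_ne hkl with hlt | hlt
    · exact pair hq0 hq1 a b c d (aV_pos k) (aV_pair hlt) (by linarith [aV_le l]) (h k) (h l)
    · exact pair hq0 hq1 c d a b (aV_pos l) (aV_pair hlt) (by linarith [aV_le k]) (h l) (h k)
  have one : ∀ k : Fin 3, x.1 k ∈ CC q → z.1 k ∈ CC q → x.2 ∈ CC q →
      z.2 ∈ CC q → x.2 - z.2 = 0 := by
    intro k a b c d
    refine pair hq0 hq1 a b c d (aV_pos k) (B := 1) (by linarith [aV_le k]) le_rfl (h k) ?_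
    rw [one_mul, sub_self, abs_zero]; positivity
  have ex2 : ∀ i : Fin 3, ∃ k l : Fin 3, k ≠ l ∧ k ≠ i ∧ l ≠ i := by decide
  have ex1 : ∀ i i' : Fin 3, ∃ k : Fin 3, k ≠ i ∧ k ≠ i' := by decide
  rcases hx with hx | ⟨i, hx, hx'⟩ <;> rcases hz with hz | ⟨i', hz, hz_last⟩
  · exact two 0 1 (by decide) (hx _) (hz _) (hx _) (hz _)
  · obtain ⟨k, l, h1, h2, h3⟩ := ex2 i'
    exact two k l h1 (hx _) (hz _ h2) (hx _) (hz _ h3)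
  · obtain ⟨k, l, h1, h2, h3⟩ := ex2 i
    exact two k l h1 (hx _ h2) (hz _) (hx _ h3) (hz _)
  · obtain ⟨k, h1, h2⟩ := ex1 i i'
    exact one k (hx _ h1) (hz _ h2) hx' hz_last

/-- The separation property: `K0` is a Lipschitz graph in the direction `(a, 1)`. -/
lemma sep {q : ℝ} (hq0 : 0 < q) (hq1 : q < 1 / 2 ^ 21) {x z : VV}
    (hx : x ∈ K0 q) (hz : z ∈ K0 q) : |x.2 - z.2| ≤ 2 ^ 14 * ‖PV x - PV z‖ := by
  by_contra! hcon
  have h0 : x.2 - z.2 = 0 := by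
    apply sep_aux hq0 hq1 hx hz
    intro j
    have h1 := norm_le_pi_norm (PV x - PV z) j
    have h2 : (PV x - PV z) j = x.1 j - z.1 j - aV j * (x.2 - z.2) := by
      simp [PV]; ring
    rw [h2, Real.norm_eq_abs] at h1
    linarith
  rw [h0, abs_zero] at hcon
  have := norm_nonneg (PV x - PV z)
  linarith

/-! ### The McShane extension -/

/-- The McShane extension of the height function. -/
def phi (q : ℝ) (p : Fin 3 → ℝ) : ℝ := ⨅ z : K0 q, (z.1.2 + 2 ^ 15 * ‖p - PV z.1‖)

lemma phi_lower {q : ℝ} (hq0 : 0 < q) (hq1 : q < 1 / 2 ^ 21) {x z : VV}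
    (hx : x ∈ K0 q) (hz : z ∈ K0 q) (p : Fin 3 → ℝ) :
    x.2 - 2 ^ 15 * ‖p - PV x‖ ≤ z.2 + 2 ^ 15 * ‖p - PV z‖ := by
  have h1 := sep hq0 hq1 hx hz
  have h2 : ‖PV x - PV z‖ ≤ ‖p - PV x‖ + ‖p - PV z‖ := by
    have : PV x - PV z = (p - PV z) - (p - PV x) := by abel
    rw [this]
    linarith [norm_sub_le (p - PV z) (p - PV x)]
  have h3 := le_abs_self (x.2 - z.2)
  have := norm_nonneg (PV x - PV z)
  linarith

lemma CC_nonempty {q : ℝ} (hq0 : 0 < q) (hq1 : q < 1 / 2 ^ 21) : ∃ c, c ∈ CC q := by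
  have : (2⁻¹ * (1 + q)) ∈ cantorU1 (fun k => q ^ k) 2 := by
    refine mem_of_word (fun _ => 1) (fun _ => Or.inl rfl) ?_
    simp [Finset.sum_range_succ]
    positivity
  obtain ⟨c, hc, _⟩ := near_CC hq0 hq1 this
  exact ⟨c, hc⟩

lemma K0_nonempty {q : ℝ} (hq0 : 0 < q) (hq1 : q < 1 / 2 ^ 21) : Nonempty (K0 q) := by
  obtain ⟨c, hc⟩ := CC_nonempty hq0 hq1
  exact ⟨⟨(fun _ => c, 0), Or.inl fun _ => hc⟩⟩

lemma phi_bdd {q : ℝ} (hq0 : 0 < q) (hq1 : q < 1 / 2 ^ 21) (p : Fin 3 → ℝ) :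
    BddBelow (Set.range fun z : K0 q => (z.1.2 + 2 ^ 15 * ‖p - PV z.1‖)) := by
  obtain ⟨⟨x, hx⟩⟩ := K0_nonempty hq0 hq1
  refine ⟨x.2 - 2 ^ 15 * ‖p - PV x‖, ?_⟩
  rintro _ ⟨z, rfl⟩
  exact phi_lower hq0 hq1 hx z.2 p

lemma phi_le {q : ℝ} (hq0 : 0 < q) (hq1 : q < 1 / 2 ^ 21) (p : Fin 3 → ℝ) {z : VV}
    (hz : z ∈ K0 q) : phi q p ≤ z.2 + 2 ^ 15 * ‖p - PV z‖ :=
  ciInf_le (phi_bdd hq0 hq1 p) ⟨z, hz⟩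

lemma le_phi {q B : ℝ} (hq0 : 0 < q) (hq1 : q < 1 / 2 ^ 21) (p : Fin 3 → ℝ)
    (h : ∀ z ∈ K0 q, B ≤ z.2 + 2 ^ 15 * ‖p - PV z‖) : B ≤ phi q p := by
  have := K0_nonempty hq0 hq1
  exact le_ciInf fun z => h z.1 z.2

lemma phi_PV {q : ℝ} (hq0 : 0 < q) (hq1 : q < 1 / 2 ^ 21) {x : VV} (hx : x ∈ K0 q) :
    phi q (PV x) = x.2 := by
  apply le_antisymm
  · simpa using phi_le hq0 hq1 (PV x) hx
  · apply le_phi hq0 hq1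
    intro z hz
    simpa using phi_lower hq0 hq1 hx hz (PV x)

lemma phi_lip {q : ℝ} (hq0 : 0 < q) (hq1 : q < 1 / 2 ^ 21) (p p' : Fin 3 → ℝ) :
    |phi q p - phi q p'| ≤ 2 ^ 15 * ‖p - p'‖ := by
  have key : ∀ p p' : Fin 3 → ℝ, phi q p - 2 ^ 15 * ‖p - p'‖ ≤ phi q p' := by
    intro p p'
    apply le_phi hq0 hq1
    intro z hz
    have h1 := phi_le hq0 hq1 p hz
    have h2 : ‖p - PV z‖ ≤ ‖p - p'‖ + ‖p' - PV z‖ := norm_sub_le_norm_sub_add_norm_sub _ _ _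
    linarith
  have h1 := key p p'
  have h2 := key p' p
  rw [norm_sub_rev] at h2
  rw [abs_le]
  constructor <;> linarith

/-- In the tubes around the vertical lines `phi` is affine in the vertical direction. -/
lemma tube {q : ℝ} (hq0 : 0 < q) (hq1 : q < 1 / 2 ^ 21) (x : Fin 3 → ℝ)
    (hx : ∀ j, x j ∈ cantorU1 (fun k => q ^ k) 2) :
    ∃ h : ℝ, |h| ≤ 1 / 100 ∧ ∀ τ : ℝ, 9 / 10 ≤ |τ| → phi q (x - τ • aV) = h + τ := by
  choose c hc hxc using fun j => near_CC hq0 hq1 (hx j)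
  have hq2 : q ^ 2 < 1 / 2 ^ 42 := by nlinarith
  have hρ : ‖x - c‖ ≤ 1 / 2 ^ 41 := by
    rw [pi_norm_le_iff_of_nonneg (by norm_num)]
    intro j
    rw [Real.norm_eq_abs]
    refine (hxc j).trans ?_
    linarith
  have hw : ∀ τ : ℝ, ((c, τ) : VV) ∈ K0 q := fun τ => Or.inl hc
  have hn : ∀ τ : ℝ, ‖x - τ • aV - PV (c, τ)‖ = ‖x - c‖ := by
    intro τ; congr 1; simp only [PV]; abel
  have hup : ∀ τ : ℝ, phi q (x - τ • aV) - τ ≤ 1 / 2 ^ 26 := by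
    intro τ
    have := phi_le hq0 hq1 (x - τ • aV) (hw τ)
    rw [hn] at this
    simp only at this
    linarith
  have hlo : ∀ τ : ℝ, - (1 / 2 ^ 26) ≤ phi q (x - τ • aV) - τ := by
    intro τ
    have := phi_lip hq0 hq1 (x - τ • aV) (PV (c, τ))
    rw [hn, phi_PV hq0 hq1 (hw τ), abs_le] at this
    simp only at this
    linarith [this.1]
  have key : ∀ τ τ' : ℝ, 9 / 10 ≤ |τ'| → phi q (x - τ • aV) - τ ≤ phi q (x - τ' • aV) - τ' := by
    intro τ τ' hτ'
    rw [le_sub_iff_add_le]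
    apply le_phi hq0 hq1
    intro z hz
    rcases hz with hz' | ⟨i, hz1, hz2⟩
    · have := phi_le hq0 hq1 (x - τ • aV) (z := (z.1, z.2 + τ - τ')) (Or.inl hz')
      have e : x - τ • aV - PV (z.1, z.2 + τ - τ') = x - τ' • aV - PV z := by
        simp only [PV]; module
      rw [e] at this
      simp only at this
      linarith
    · have hu := hup τ
      have hb := CC_bound hq1 hz2
      rw [abs_le] at hb
      rcases le_abs'.mp hτ' with hneg | hpos
      · have := norm_nonneg (x - τ' • aV - PV z)
        linarith [hb.1]
      · have h1 := sep hq0 hq1 (hw τ') (Or.inr ⟨i, hz1, hz2⟩ : z ∈ K0 q)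
        have h2 : ‖PV (c, τ') - PV z‖ ≤ ‖x - c‖ + ‖x - τ' • aV - PV z‖ := by
          rw [← hn τ', norm_sub_rev _ (PV (c, τ'))]
          exact norm_sub_le_norm_sub_add_norm_sub _ _ _
        have h3 := le_abs_self (τ' - z.2)
        simp only at h1
        linarith [hb.2]
  have h1 : (9 / 10 : ℝ) ≤ |1| := by norm_num
  refine ⟨phi q (x - (1 : ℝ) • aV) - 1, ?_, ?_⟩
  · rw [abs_le]
    constructor <;> linarith [hup 1, hlo 1]
  · intro τ hτ
    have := le_antisymm (key τ 1 h1) (key 1 τ hτ)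
    linarith

/-! ### Clamping and periodization -/

/-- Truncation of `x` to `[-b, b]`. -/
def clamp (b x : ℝ) : ℝ := max (-b) (min b x)

lemma clamp_lip (b b' x x' : ℝ) : |clamp b x - clamp b' x'| ≤ max |b - b'| |x - x'| := by
  unfold clamp
  refine (abs_max_sub_max_le_max _ _ _ _).trans (max_le ?_ ?_)
  · rw [show -b - -b' = -(b - b') by ring, abs_neg]; exact le_max_left _ _
  · exact abs_min_sub_min_le_max _ _ _ _

lemma clamp_abs {b : ℝ} (hb : 0 ≤ b) (x : ℝ) : |clamp b x| ≤ b := by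
  unfold clamp
  rw [abs_le]
  exact ⟨le_max_left _ _, max_le (by linarith) (min_le_left _ _)⟩

lemma clamp_eq {b x : ℝ} (h : |x| ≤ b) : clamp b x = x := by
  rw [abs_le] at h
  unfold clamp
  rw [min_eq_right h.2, max_eq_right h.1]

lemma clamp_zero (x : ℝ) : clamp 0 x = 0 := by
  have := clamp_abs le_rfl x
  simpa using this

/-- A bump function equal to `u` near the Cantor set and to `0` for `|u| ≥ 9/10`. -/
def bump (u : ℝ) : ℝ := clamp (max 0 (9 / 5 - 2 * |u|)) u

lemma bump_lip (u u' : ℝ) : |bump u - bump u'| ≤ 2 * |u - u'| := by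
  unfold bump
  refine (clamp_lip _ _ _ _).trans (max_le ?_ ?_)
  · refine (abs_max_sub_max_le_max _ _ _ _).trans (max_le ?_ ?_)
    · simp
    · have h1 := abs_abs_sub_abs_le_abs_sub u u'
      rw [show 9 / 5 - 2 * |u| - (9 / 5 - 2 * |u'|) = -(2 * (|u| - |u'|)) by ring, abs_neg,
        abs_mul]
      norm_num
      exact h1
  · linarith [abs_nonneg (u - u')]

lemma bump_eq {u : ℝ} (h : |u| ≤ 6 / 10) : bump u = u := by
  apply clamp_eq
  exact le_trans (by linarith) (le_max_right _ _)

lemma bump_zero {u : ℝ} (h : 9 / 10 ≤ |u|) : bump u = 0 := by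
  unfold bump
  rw [max_eq_left (by linarith), clamp_zero]

lemma bump_abs (u : ℝ) : |bump u| ≤ max 0 (9 / 5 - 2 * |u|) := clamp_abs (le_max_left _ _) _

/-- The truncated nearest even lattice index. -/
def NN (m : ℕ) (t : ℝ) : ℤ := max (-(m : ℤ)) (min (m : ℤ) (round (t / 2)))

/-- The periodization of `bump`. -/
def theta (m : ℕ) (t : ℝ) : ℝ := bump (t - 2 * (NN m t : ℝ))

lemma theta_lip_aux (m : ℕ) {t s : ℝ} (hts : t ≤ s) :
    |theta m t - theta m s| ≤ 2 * (s - t) := by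
  have hmono : NN m t ≤ NN m s := by
    have : round (t / 2) ≤ round (s / 2) := by
      rw [round_eq, round_eq]
      apply Int.floor_mono
      linarith
    unfold NN
    omega
  rcases eq_or_lt_of_le hmono with h | h
  · unfold theta
    rw [← h]
    refine (bump_lip _ _).trans ?_
    rw [show t - 2 * (NN m t : ℝ) - (s - 2 * (NN m t : ℝ)) = -(s - t) by ring, abs_neg,
      abs_of_nonneg (by linarith)]
  · have h1 : round (t / 2) ≤ NN m t := by unfold NN at *; omega
    have h2 : NN m s ≤ round (s / 2) := by unfold NN at *; omega
    have h1' : (round (t / 2) : ℝ) ≤ NN m t := by exact_mod_cast h1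
    have h2' : (NN m s : ℝ) ≤ round (s / 2) := by exact_mod_cast h2
    have h3 : (NN m t : ℝ) + 1 ≤ NN m s := by exact_mod_cast h
    have r1 := abs_le.mp (abs_sub_round (t / 2))
    have r2 := abs_le.mp (abs_sub_round (s / 2))
    have b1 : |theta m t| ≤ 2 * (1 - (t - 2 * (NN m t : ℝ))) := by
      refine (bump_abs _).trans (max_le ?_ ?_)
      · linarith [r1.2]
      · linarith [le_abs_self (t - 2 * (NN m t : ℝ))]
    have b2 : |theta m s| ≤ 2 * (1 + (s - 2 * (NN m s : ℝ))) := by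
      refine (bump_abs _).trans (max_le ?_ ?_)
      · linarith [r2.1]
      · linarith [neg_abs_le (s - 2 * (NN m s : ℝ))]
    have := abs_sub (theta m t) (theta m s)
    linarith

lemma theta_lip (m : ℕ) (t s : ℝ) : |theta m t - theta m s| ≤ 2 * |t - s| := by
  rcases le_total t s with h | h
  · rw [abs_sub_comm t s, abs_of_nonneg (sub_nonneg.mpr h)]
    exact theta_lip_aux m h
  · rw [abs_sub_comm (theta m t), abs_of_nonneg (sub_nonneg.mpr h)]
    exact theta_lip_aux m h

lemma theta_shift (m : ℕ) {u : ℝ} {n : ℤ} (hu : |u| ≤ 11 / 10) (hn : |n| ≤ (m : ℤ)) :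
    theta m (u + 2 * (n : ℝ)) = bump u := by
  rcases lt_or_ge |u| 1 with h | h
  · have hr : round ((u + 2 * (n : ℝ)) / 2) = n := by
      have r := abs_le.mp (abs_sub_round ((u + 2 * (n : ℝ)) / 2))
      rw [abs_lt] at h
      have h1 : (round ((u + 2 * (n : ℝ)) / 2) : ℝ) < n + 1 := by linarith [r.1, h.2]
      have h2 : (n : ℝ) < round ((u + 2 * (n : ℝ)) / 2) + 1 := by linarith [r.2, h.1]
      have h1' : round ((u + 2 * (n : ℝ)) / 2) < n + 1 := by exact_mod_cast h1
      have h2' : n < round ((u + 2 * (n : ℝ)) / 2) + 1 := by exact_mod_cast h2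
      omega
    have hN : NN m (u + 2 * (n : ℝ)) = n := by
      unfold NN
      rw [hr]
      rw [abs_le] at hn
      omega
    unfold theta
    rw [hN]
    congr 1; ring
  · rw [bump_zero (by linarith)]
    unfold theta
    apply bump_zero
    set N := NN m (u + 2 * (n : ℝ))
    have e : u + 2 * (n : ℝ) - 2 * (N : ℝ) = u - 2 * ((N - n : ℤ) : ℝ) := by push_cast; ring
    rw [e]
    generalize N - n = k
    rw [abs_le] at hu
    rw [le_abs'] at h ⊢
    rcases h with h | h
    · rcases le_or_gt k (-1) with hk | hk
      · right
        have : (k : ℝ) ≤ -1 := by exact_mod_cast hk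
        linarith [hu.1]
      · left
        have : (0 : ℝ) ≤ k := by exact_mod_cast (by omega : 0 ≤ k)
        linarith
    · rcases le_or_gt 1 k with hk | hk
      · left
        have : (1 : ℝ) ≤ k := by exact_mod_cast hk
        linarith [hu.2]
      · right
        have : (k : ℝ) ≤ 0 := by exact_mod_cast (by omega : k ≤ 0)
        linarith

lemma theta_zero (m : ℕ) {t : ℝ} (h : 2 * (m : ℝ) + 9 / 10 ≤ |t|) : theta m t = 0 := by
  unfold theta
  apply bump_zero
  have h1 : |NN m t| ≤ (m : ℤ) := by unfold NN; rw [abs_le]; omega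
  have h2 : |(NN m t : ℝ)| ≤ m := by exact_mod_cast h1
  have h3 := abs_sub_abs_le_abs_sub t (2 * (NN m t : ℝ))
  rw [abs_mul, abs_two] at h3
  linarith

/-! ### The shear maps -/

/-- The cut-off height. -/
def bb (m : ℕ) (p : Fin 3 → ℝ) (t : ℝ) : ℝ :=
  max 0 (min 4 (min ((13 - |t|) / 2) (4 * (2 * (m : ℝ) + 9 / 2 - ‖p‖))))

/-- The amount of vertical shift. -/
def gg (q : ℝ) (m : ℕ) (p : Fin 3 → ℝ) (t : ℝ) : ℝ :=
  clamp (bb m p t) (phi q (fun j => theta m (p j)))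

/-- The vertical shift map. -/
def TT (q : ℝ) (m : ℕ) (v : VV) : VV := (v.1, v.2 - gg q m v.1 v.2)

lemma bb_nonneg (m : ℕ) (p : Fin 3 → ℝ) (t : ℝ) : 0 ≤ bb m p t := le_max_left _ _

lemma bb_le (m : ℕ) (p : Fin 3 → ℝ) (t : ℝ) : bb m p t ≤ 4 :=
  max_le (by norm_num) (min_le_left _ _)

lemma bb_eq (m : ℕ) {p : Fin 3 → ℝ} {t : ℝ} (ht : |t| ≤ 5)
    (hp : ∀ j, |p j| ≤ 2 * (m : ℝ) + 7 / 2) : bb m p t = 4 := by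
  have hp' : ‖p‖ ≤ 2 * (m : ℝ) + 7 / 2 := (pi_norm_le_iff_of_nonneg (by positivity)).mpr hp
  unfold bb
  rw [min_eq_left, max_eq_right (by norm_num)]
  exact le_min (by linarith) (by linarith)

lemma bb_zero_t (m : ℕ) {p : Fin 3 → ℝ} {t : ℝ} (ht : 13 ≤ |t|) : bb m p t = 0 := by
  unfold bb
  apply max_eq_left
  refine (min_le_right _ _).trans ((min_le_left _ _).trans (by linarith))

lemma bb_zero_p (m : ℕ) {p : Fin 3 → ℝ} {t : ℝ} (j : Fin 3)
    (hp : 2 * (m : ℝ) + 9 / 2 ≤ |p j|) : bb m p t = 0 := by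
  have := norm_le_pi_norm p j
  rw [Real.norm_eq_abs] at this
  unfold bb
  apply max_eq_left
  refine (min_le_right _ _).trans ((min_le_right _ _).trans (by linarith))

lemma bb_lip (m : ℕ) (p p' : Fin 3 → ℝ) (t t' : ℝ) :
    |bb m p t - bb m p' t'| ≤ 1 / 2 * |t - t'| + 4 * ‖p - p'‖ := by
  have n1 := abs_nonneg (t - t')
  have n2 := norm_nonneg (p - p')
  unfold bb
  refine (abs_max_sub_max_le_max _ _ _ _).trans (max_le (by simp; positivity) ?_)
  refine (abs_min_sub_min_le_max _ _ _ _).trans (max_le (by simp; positivity) ?_)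
  refine (abs_min_sub_min_le_max _ _ _ _).trans (max_le ?_ ?_)
  · have := abs_abs_sub_abs_le_abs_sub t t'
    rw [show (13 - |t|) / 2 - (13 - |t'|) / 2 = -(1 / 2 * (|t| - |t'|)) by ring, abs_neg,
      abs_mul, abs_of_pos (by norm_num : (0 : ℝ) < 1 / 2)]
    linarith
  · have := abs_norm_sub_norm_le p p'
    rw [show 4 * (2 * (m : ℝ) + 9 / 2 - ‖p‖) - 4 * (2 * (m : ℝ) + 9 / 2 - ‖p'‖) =
      -(4 * (‖p‖ - ‖p'‖)) by ring, abs_neg, abs_mul, abs_of_pos (by norm_num : (0 : ℝ) < 4)]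
    linarith

lemma gg_abs (q : ℝ) (m : ℕ) (p : Fin 3 → ℝ) (t : ℝ) : |gg q m p t| ≤ 4 :=
  (clamp_abs (bb_nonneg _ _ _) _).trans (bb_le _ _ _)

lemma gg_lip {q : ℝ} (hq0 : 0 < q) (hq1 : q < 1 / 2 ^ 21) (m : ℕ) (p p' : Fin 3 → ℝ) (t t' : ℝ) :
    |gg q m p t - gg q m p' t'| ≤ 1 / 2 * |t - t'| + 2 ^ 16 * ‖p - p'‖ := by
  have n1 := abs_nonneg (t - t')
  have n2 := norm_nonneg (p - p')
  unfold gg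
  refine (clamp_lip _ _ _ _).trans (max_le ?_ ?_)
  · refine (bb_lip _ _ _ _ _).trans ?_
    linarith
  · refine (phi_lip hq0 hq1 _ _).trans ?_
    have : ‖(fun j => theta m (p j)) - (fun j => theta m (p' j))‖ ≤ 2 * ‖p - p'‖ := by
      rw [pi_norm_le_iff_of_nonneg (by positivity)]
      intro j
      have h1 := norm_le_pi_norm (p - p') j
      rw [Real.norm_eq_abs, Pi.sub_apply] at h1
      rw [Real.norm_eq_abs, Pi.sub_apply]
      refine (theta_lip m _ _).trans ?_
      linarith
    linarith

lemma TT_lip {q : ℝ} (hq0 : 0 < q) (hq1 : q < 1 / 2 ^ 21) (m : ℕ) :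
    LipschitzWith (2 ^ 18) (TT q m) := by
  apply LipschitzWith.of_dist_le_mul
  intro x y
  have h := gg_lip hq0 hq1 m x.1 y.1 x.2 y.2
  have h1 : ‖x.1 - y.1‖ ≤ dist x y := by
    rw [← dist_eq_norm, Prod.dist_eq]; exact le_max_left _ _
  have h2 : |x.2 - y.2| ≤ dist x y := by
    rw [← Real.dist_eq, Prod.dist_eq]; exact le_max_right _ _
  have h0 : 0 ≤ dist x y := dist_nonneg
  have n2 := norm_nonneg (x.1 - y.1)
  push_cast
  rw [Prod.dist_eq (x := TT q m x)]
  simp only [TT]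
  refine max_le ?_ ?_
  · rw [dist_eq_norm]; linarith
  · rw [Real.dist_eq]
    have h3 := abs_le.mp h
    have h4 := abs_le.mp h2
    rw [abs_le]
    constructor <;> linarith [h3.1, h3.2, h4.1, h4.2]

lemma TT_anti {q : ℝ} (hq0 : 0 < q) (hq1 : q < 1 / 2 ^ 21) (m : ℕ) :
    AntilipschitzWith (2 ^ 18) (TT q m) := by
  apply AntilipschitzWith.of_le_mul_dist
  intro x y
  have h := gg_lip hq0 hq1 m x.1 y.1 x.2 y.2
  have h1 : ‖x.1 - y.1‖ ≤ dist (TT q m x) (TT q m y) := by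
    rw [← dist_eq_norm, Prod.dist_eq]; exact le_max_left _ _
  have h2 : |(x.2 - gg q m x.1 x.2) - (y.2 - gg q m y.1 y.2)| ≤ dist (TT q m x) (TT q m y) := by
    rw [← Real.dist_eq, Prod.dist_eq]; exact le_max_right _ _
  have h0 : 0 ≤ dist (TT q m x) (TT q m y) := dist_nonneg
  have n2 := norm_nonneg (x.1 - y.1)
  have h3 : |x.2 - y.2| ≤ |(x.2 - gg q m x.1 x.2) - (y.2 - gg q m y.1 y.2)| +
      |gg q m x.1 x.2 - gg q m y.1 y.2| := by
    refine le_trans (le_of_eq ?_) (abs_add_le _ _)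
    congr 1; ring
  push_cast
  rw [Prod.dist_eq (x := x)]
  refine max_le ?_ ?_
  · rw [dist_eq_norm]; linarith
  · rw [Real.dist_eq]; linarith

lemma TT_surj {q : ℝ} (hq0 : 0 < q) (hq1 : q < 1 / 2 ^ 21) (m : ℕ) :
    Function.Surjective (TT q m) := by
  rintro ⟨p, s⟩
  have hc : Continuous fun t : ℝ => t - gg q m p t := by
    have := (TT_lip hq0 hq1 m).continuous
    exact continuous_snd.comp (this.comp (Continuous.prodMk_right p))
  have hs : Function.Surjective fun t : ℝ => t - gg q m p t := by
    apply hc.surjective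
    · refine tendsto_atTop_mono (f := fun t : ℝ => t + (-4)) ?_
        (tendsto_atTop_add_const_right _ _ tendsto_id)
      intro t
      have := abs_le.mp (gg_abs q m p t)
      linarith [this.2]
    · refine tendsto_atBot_mono (f := fun t : ℝ => t + 4) ?_
        (tendsto_atBot_add_const_right _ _ tendsto_id)
      intro t
      have := abs_le.mp (gg_abs q m p t)
      linarith [this.1]
  obtain ⟨t, ht⟩ := hs s
  exact ⟨(p, t), by simp only [TT]; exact Prod.ext rfl ht⟩

/-- The linear shear `(x, t) ↦ (x - t b, t)`. -/
def AA (b : Fin 3 → ℝ) : VV ≃L[ℝ] VV :=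
  LinearEquiv.toContinuousLinearEquiv
    { toFun := fun v => (v.1 - v.2 • b, v.2)
      invFun := fun v => (v.1 + v.2 • b, v.2)
      map_add' := by
        intro x y
        refine Prod.ext ?_ rfl
        simp only [Prod.fst_add, Prod.snd_add]
        module
      map_smul' := by
        intro c x
        refine Prod.ext ?_ rfl
        simp only [Prod.smul_fst, Prod.smul_snd, RingHom.id_apply, smul_eq_mul]
        module
      left_inv := by intro x; simp
      right_inv := by intro x; simp }

lemma AA_apply (b : Fin 3 → ℝ) (v : VV) : AA b v = (v.1 - v.2 • b, v.2) := rfl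

/-- The map in product coordinates. -/
def FF (q : ℝ) (m : ℕ) (v : VV) : VV :=
  AA aV (TT q m (AA (-(2 : ℝ) • aV) (TT q m (AA aV v))))

/-- The passage from `E4` to product coordinates. -/
def eV : E4 ≃L[ℝ] VV :=
  LinearEquiv.toContinuousLinearEquiv
    { toFun := fun x => (fun j : Fin 3 => x j.castSucc, x 3)
      invFun := fun v => WithLp.toLp 2 ![v.1 0, v.1 1, v.1 2, v.2]
      map_add' := by intro x y; rfl
      map_smul' := by intro c x; rfl
      left_inv := by
        intro x
        ext i
        fin_cases i <;> rfl
      right_inv := by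
        intro x
        refine Prod.ext ?_ rfl
        funext j
        fin_cases j <;> rfl }

lemma eV_apply (x : E4) : eV x = (fun j : Fin 3 => x j.castSucc, x 3) := rfl

/-- The final map. -/
def Fhat (q : ℝ) (m : ℕ) (x : E4) : E4 := eV.symm (FF q m (eV x))

lemma Fhat_exists_lip : ∃ K : NNReal, ∀ q : ℝ, 0 < q → q < 1 / 2 ^ 21 → ∀ m : ℕ,
    LipschitzWith K (Fhat q m) ∧ AntilipschitzWith K (Fhat q m) ∧
      Function.Surjective (Fhat q m) := by
  have l : ∃ K1 : NNReal, ∀ q : ℝ, 0 < q → q < 1 / 2 ^ 21 → ∀ m : ℕ, LipschitzWith K1 (Fhat q m) :=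
    ⟨_, fun q hq0 hq1 m => eV.symm.lipschitz.comp ((AA aV).lipschitz.comp ((TT_lip hq0 hq1 m).comp
      ((AA (-(2 : ℝ) • aV)).lipschitz.comp ((TT_lip hq0 hq1 m).comp
        ((AA aV).lipschitz.comp eV.lipschitz)))))⟩
  have a : ∃ K2 : NNReal, ∀ q : ℝ, 0 < q → q < 1 / 2 ^ 21 → ∀ m : ℕ, AntilipschitzWith K2 (Fhat q m) :=
    ⟨_, fun q hq0 hq1 m => eV.symm.antilipschitz.comp ((AA aV).antilipschitz.comp
      ((TT_anti hq0 hq1 m).comp ((AA (-(2 : ℝ) • aV)).antilipschitz.comp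
        ((TT_anti hq0 hq1 m).comp ((AA aV).antilipschitz.comp eV.antilipschitz)))))⟩
  obtain ⟨K1, l⟩ := l
  obtain ⟨K2, a⟩ := a
  refine ⟨max K1 K2, fun q hq0 hq1 m => ⟨(l q hq0 hq1 m).weaken (le_max_left _ _), ?_, ?_⟩⟩
  · intro x y
    refine (a q hq0 hq1 m x y).trans ?_
    gcongr
    exact le_max_right _ _
  · exact eV.symm.surjective.comp ((AA aV).surjective.comp ((TT_surj hq0 hq1 m).comp
      ((AA (-(2 : ℝ) • aV)).surjective.comp ((TT_surj hq0 hq1 m).comp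
        ((AA aV).surjective.comp eV.surjective)))))

/-! ### Properties of the map in product coordinates -/

lemma FF_of (q : ℝ) (m : ℕ) {v : VV} {p p2 : Fin 3 → ℝ} {t1 t2 : ℝ}
    (hp : p = fun j => v.1 j - v.2 * aV j) (h1 : t1 = v.2 - gg q m p v.2)
    (h2 : p2 = fun j => p j + 2 * t1 * aV j) (h3 : t2 = t1 - gg q m p2 t1) :
    FF q m v = (fun j => p2 j - t2 * aV j, t2) := by
  have e1 : AA aV v = (p, v.2) := by
    rw [AA_apply, hp]; rfl
  have e2 : AA (-(2 : ℝ) • aV) (p, t1) = (p2, t1) := by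
    rw [AA_apply, h2]
    refine Prod.ext ?_ rfl
    funext j
    simp
    ring
  unfold FF
  rw [e1]
  simp only [TT]
  rw [← h1, e2, ← h3]
  rfl

lemma aux_mul (j : Fin 3) {t B : ℝ} (h : |t| ≤ B) : |t * aV j| ≤ B / 256 := by
  have h1 := aV_pos j
  have h2 := aV_le j
  rw [abs_mul, abs_of_pos (by linarith : 0 < aV j)]
  nlinarith [abs_nonneg t]

lemma gg_eq_phi (q : ℝ) (m : ℕ) {p : Fin 3 → ℝ} {t s : ℝ} (ht : |t| ≤ 5)
    (hp : ∀ j, |p j| ≤ 2 * (m : ℝ) + 7 / 2) (hs : |s| ≤ 4)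
    (h : phi q (fun j => theta m (p j)) = s) : gg q m p t = s := by
  unfold gg
  rw [bb_eq m ht hp, h, clamp_eq hs]

lemma FF_reflect (q : ℝ) (m : ℕ) {v : VV} (h3 : |v.2| ≤ 3)
    (hv : ∀ j, |v.1 j| ≤ 2 * (m : ℝ) + 3)
    (h : phi q (fun j => theta m (v.1 j - v.2 * aV j)) = v.2) : FF q m v = (v.1, -v.2) := by
  have hp : ∀ j, |v.1 j - v.2 * aV j| ≤ 2 * (m : ℝ) + 7 / 2 := by
    intro j
    have h1 := aux_mul j h3
    have h2 := abs_sub (v.1 j) (v.2 * aV j)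
    linarith [hv j]
  have g1 : gg q m (fun j => v.1 j - v.2 * aV j) v.2 = v.2 :=
    gg_eq_phi q m (by linarith) hp (by linarith) h
  have g2 : gg q m (fun j => v.1 j - v.2 * aV j) 0 = v.2 :=
    gg_eq_phi q m (by simp) hp (by linarith) h
  have := FF_of q m (v := v) (p2 := fun j => v.1 j - v.2 * aV j) (t1 := 0) (t2 := -v.2) rfl
    (by rw [g1]; ring) (by funext j; ring) (by rw [g2]; ring)
  rw [this]
  refine Prod.ext ?_ rfl
  funext j
  simp only
  ring

lemma FF_id_t (q : ℝ) (m : ℕ) {v : VV} (h : 14 ≤ |v.2|) : FF q m v = v := by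
  have g : ∀ p, gg q m p v.2 = 0 := by
    intro p
    unfold gg
    rw [bb_zero_t m (by linarith), clamp_zero]
  have := FF_of q m (v := v) (t1 := v.2) (t2 := v.2) rfl (by rw [g]; ring) rfl (by rw [g]; ring)
  rw [this]
  refine Prod.ext ?_ rfl
  funext j
  simp only
  ring

lemma FF_id_p (q : ℝ) (m : ℕ) {v : VV} (i : Fin 3) (hi : 2 * (m : ℝ) + 5 ≤ |v.1 i|)
    (h : |v.2| ≤ 14) : FF q m v = v := by
  have h1 := aux_mul i h
  have g : ∀ p : Fin 3 → ℝ, |v.1 i - p i| ≤ 14 / 256 → gg q m p v.2 = 0 := by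
    intro p hp
    unfold gg
    rw [bb_zero_p m i, clamp_zero]
    linarith [abs_sub_abs_le_abs_sub (v.1 i) (p i)]
  have := FF_of q m (v := v) (t1 := v.2) (t2 := v.2) rfl
    (by
      rw [g, sub_zero]
      rw [sub_sub_cancel]; exact h1) rfl
    (by
      rw [g, sub_zero]
      rw [show v.1 i - (v.1 i - v.2 * aV i + 2 * v.2 * aV i) = -(v.2 * aV i) by ring, abs_neg]
      exact h1)
  rw [this]
  refine Prod.ext ?_ rfl
  funext j
  simp only
  ring

lemma gg_shift (q : ℝ) (m : ℕ) {p : Fin 3 → ℝ} {t : ℝ} {n : Fin 3 → ℤ} (ht : |t| ≤ 5)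
    (hp : ∀ j, |p j| ≤ 11 / 10) (hn : ∀ j, |n j| ≤ (m : ℤ)) :
    gg q m (fun j => p j + 2 * (n j : ℝ)) t = gg q m p t := by
  have hm : (0 : ℝ) ≤ m := Nat.cast_nonneg m
  unfold gg
  rw [bb_eq m ht, bb_eq m ht]
  · congr 2
    funext j
    rw [theta_shift m (hp j) (hn j)]
    have := theta_shift m (n := 0) (hp j) (by simp)
    simp at this
    rw [this]
  · intro j; linarith [hp j]
  · intro j
    have h1 := abs_add_le (p j) (2 * (n j : ℝ))
    have h2 : |(n j : ℝ)| ≤ m := by exact_mod_cast hn j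
    rw [abs_mul, abs_two] at h1
    linarith [hp j]

lemma FF_shift (q : ℝ) (m : ℕ) {v : VV} {n : Fin 3 → ℤ} (ht : |v.2| ≤ 1)
    (hp : ∀ j, |v.1 j| ≤ 1) (hn : ∀ j, |n j| ≤ (m : ℤ)) :
    FF q m (v + (fun j => 2 * (n j : ℝ), 0)) = FF q m v + (fun j => 2 * (n j : ℝ), 0) := by
  set p : Fin 3 → ℝ := fun j => v.1 j - v.2 * aV j with hpd
  set t1 := v.2 - gg q m p v.2 with ht1
  set p2 : Fin 3 → ℝ := fun j => p j + 2 * t1 * aV j with hp2d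
  set t2 := t1 - gg q m p2 t1 with ht2
  have e0 := FF_of q m hpd ht1 hp2d ht2
  have hpb : ∀ j, |p j| ≤ 1 + 1 / 256 := by
    intro j
    have h1 := aux_mul j ht
    have h2 := abs_sub (v.1 j) (v.2 * aV j)
    simp only [hpd]
    linarith [hp j]
  have ht1b : |t1| ≤ 5 := by
    have h1 := gg_abs q m p v.2
    have h2 := abs_sub v.2 (gg q m p v.2)
    linarith
  have hp2b : ∀ j, |p2 j| ≤ 11 / 10 := by
    intro j
    have h1 := aux_mul j (t := 2 * t1) (B := 10) (by rw [abs_mul, abs_two]; linarith)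
    have h2 := abs_add_le (p j) (2 * t1 * aV j)
    simp only [hp2d]
    linarith [hpb j]
  have s1 := gg_shift q m (t := v.2) (by linarith) (fun j => (hpb j).trans (by norm_num)) hn
  have s2 := gg_shift q m ht1b hp2b hn
  have e1 := FF_of q m (v := v + (fun j => 2 * (n j : ℝ), 0))
    (p := fun j => p j + 2 * (n j : ℝ)) (p2 := fun j => p2 j + 2 * (n j : ℝ)) (t1 := t1) (t2 := t2)
    (by funext j; simp [hpd]; ring) (by simp [s1, ht1])
    (by funext j; simp only [hp2d]; ring) (by rw [s2])
  rw [e0, e1]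
  refine Prod.ext ?_ (by simp)
  funext j
  simp
  ring

lemma gg_side (q : ℝ) (m : ℕ) {p p' : Fin 3 → ℝ} {t : ℝ} (i : Fin 3) (ht : |t| ≤ 5)
    (hp : ∀ j, |p j| ≤ 2 * (m : ℝ) + 7 / 2) (hp' : ∀ j, |p' j| ≤ 2 * (m : ℝ) + 7 / 2)
    (hpp : ∀ j, j ≠ i → p' j = p j) (h : 2 * (m : ℝ) + 9 / 10 ≤ |p i|)
    (h' : 2 * (m : ℝ) + 9 / 10 ≤ |p' i|) : gg q m p' t = gg q m p t := by
  unfold gg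
  rw [bb_eq m ht hp, bb_eq m ht hp']
  congr 2
  funext j
  by_cases hj : j = i
  · subst hj
    rw [theta_zero m h, theta_zero m h']
  · rw [hpp j hj]

lemma FF_side (q : ℝ) (m : ℕ) {v v' : VV} (i : Fin 3) (ht : |v.2| ≤ 1) (ht' : v'.2 = v.2)
    (hp : ∀ j, |v.1 j| ≤ 2 * (m : ℝ) + 31 / 10) (hp' : ∀ j, |v'.1 j| ≤ 2 * (m : ℝ) + 31 / 10)
    (hpp : ∀ j, j ≠ i → v'.1 j = v.1 j) (h : 2 * (m : ℝ) + 99 / 100 ≤ |v.1 i|)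
    (h' : 2 * (m : ℝ) + 99 / 100 ≤ |v'.1 i|) : FF q m v' = FF q m v + (v' - v) := by
  set p : Fin 3 → ℝ := fun j => v.1 j - v.2 * aV j with hpd
  set t1 := v.2 - gg q m p v.2 with ht1
  set p2 : Fin 3 → ℝ := fun j => p j + 2 * t1 * aV j with hp2d
  set t2 := t1 - gg q m p2 t1 with ht2
  have e0 := FF_of q m hpd ht1 hp2d ht2
  have ht1b : |t1| ≤ 5 := by
    have h1 := gg_abs q m p v.2
    have h2 := abs_sub v.2 (gg q m p v.2)
    linarith
  have near : ∀ (s : ℝ) (j : Fin 3), |s - (s - v.2 * aV j)| ≤ 1 / 256 := by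
    intro s j
    rw [sub_sub_cancel]; exact aux_mul j ht
  have near2 : ∀ (s : ℝ) (j : Fin 3),
      |s - (s - v.2 * aV j + 2 * t1 * aV j)| ≤ 11 / 256 := by
    intro s j
    have h1 := aux_mul j (t := v.2 - 2 * t1) (B := 11) (by
      have := abs_sub v.2 (2 * t1)
      rw [abs_mul, abs_two] at this
      linarith)
    rwa [show s - (s - v.2 * aV j + 2 * t1 * aV j) = (v.2 - 2 * t1) * aV j by ring]
  have up : ∀ s r : ℝ, |s - r| ≤ 11 / 256 → |s| ≤ 2 * (m : ℝ) + 31 / 10 →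
      |r| ≤ 2 * (m : ℝ) + 7 / 2 := by
    intro s r h1 h2
    have := abs_sub_abs_le_abs_sub r s
    rw [abs_sub_comm r s] at this
    linarith
  have low : ∀ s r : ℝ, |s - r| ≤ 11 / 256 → 2 * (m : ℝ) + 99 / 100 ≤ |s| →
      2 * (m : ℝ) + 9 / 10 ≤ |r| := by
    intro s r h1 h2
    have := abs_sub_abs_le_abs_sub s r
    linarith
  have w : ∀ s r : ℝ, |s - r| ≤ 1 / 256 → |s - r| ≤ 11 / 256 := fun s r h => h.trans (by norm_num)
  have s1 : gg q m (fun j => v'.1 j - v.2 * aV j) v.2 = gg q m p v.2 :=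
    gg_side q m i (by linarith) (fun j => up _ _ (w _ _ (near _ j)) (hp j))
      (fun j => up _ _ (w _ _ (near _ j)) (hp' j)) (fun j hj => by simp only [hpd, hpp j hj])
      (low _ _ (w _ _ (near _ i)) h) (low _ _ (w _ _ (near _ i)) h')
  have s2 : gg q m (fun j => v'.1 j - v.2 * aV j + 2 * t1 * aV j) t1 = gg q m p2 t1 :=
    gg_side q m i ht1b (fun j => up _ _ (near2 _ j) (hp j))
      (fun j => up _ _ (near2 _ j) (hp' j)) (fun j hj => by simp only [hp2d, hpd, hpp j hj])
      (low _ _ (near2 _ i) h) (low _ _ (near2 _ i) h')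
  have e1 := FF_of q m (v := v')
    (p := fun j => v'.1 j - v.2 * aV j) (p2 := fun j => v'.1 j - v.2 * aV j + 2 * t1 * aV j)
    (t1 := t1) (t2 := t2)
    (by rw [ht']) (by rw [ht', s1]) rfl (by rw [s2])
  rw [e0, e1]
  refine Prod.ext ?_ (by simp [ht'])
  funext j
  simp [hp2d, hpd]
  ring

lemma FF_tube {q : ℝ} (hq0 : 0 < q) (hq1 : q < 1 / 2 ^ 21) (m : ℕ) (x : Fin 3 → ℝ)
    (hx : ∀ j, x j ∈ cantorU1 (fun k => q ^ k) 2) {n : Fin 3 → ℤ} (hn : ∀ j, |n j| ≤ (m : ℤ)) :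
    ∃ h : ℝ, ∀ τ : ℝ, 95 / 100 ≤ |τ| → |τ| ≤ 305 / 100 →
      FF q m (fun j => x j + 2 * (n j : ℝ), τ) =
        (fun j => x j + 2 * (n j : ℝ) + 2 * h * aV j, -τ - 4 * h) := by
  obtain ⟨h, hh, hphi⟩ := tube hq0 hq1 x hx
  refine ⟨h, fun τ hτ1 hτ2 => ?_⟩
  have hm : (0 : ℝ) ≤ m := Nat.cast_nonneg m
  -- the value of `gg` along the tube
  have key : ∀ σ t : ℝ, 9 / 10 ≤ |σ| → |σ| ≤ 31 / 10 → |t| ≤ 5 →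
      gg q m (fun j => x j + 2 * (n j : ℝ) - σ * aV j) t = h + σ := by
    intro σ t hσ1 hσ2 ht
    have hb : ∀ j, |x j - σ * aV j| ≤ 6 / 10 := by
      intro j
      have h1 := aux_mul j hσ2
      have h2 := U2_bound hq0 hq1 (hx j)
      have h3 := abs_sub (x j) (σ * aV j)
      linarith
    have e : (fun j => x j + 2 * (n j : ℝ) - σ * aV j) =
        fun j => (x - σ • aV) j + 2 * (n j : ℝ) := by
      funext j
      simp
      ring
    rw [e, gg_shift q m ht _ hn]
    · apply gg_eq_phi q m ht
      · intro j
        have := hb j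
        simp only [Pi.sub_apply, Pi.smul_apply, smul_eq_mul]
        linarith
      · linarith [abs_add_le h σ]
      · rw [← hphi σ hσ1]
        congr 1
        funext j
        have := theta_shift m (u := (x - σ • aV) j) (n := 0)
          (by simp only [Pi.sub_apply, Pi.smul_apply, smul_eq_mul]; linarith [hb j]) (by simp)
        simp only [Int.cast_zero, mul_zero, add_zero] at this
        rw [this]
        apply bump_eq
        simpa using hb j
    · intro j
      have := hb j
      simp only [Pi.sub_apply, Pi.smul_apply, smul_eq_mul]
      linarith
  have h2h : |2 * h| ≤ 2 / 100 := by rw [abs_mul, abs_two]; linarith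
  have g1 := key τ τ (by linarith) (by linarith) (by linarith)
  have g2 := key (τ + 2 * h) (-h)
    (by
      have := abs_sub_abs_le_abs_sub τ (-(2 * h))
      rw [abs_neg, sub_neg_eq_add] at this
      linarith)
    (by linarith [abs_add_le τ (2 * h)]) (by rw [abs_neg]; linarith)
  have e := FF_of q m (v := (fun j => x j + 2 * (n j : ℝ), τ))
    (p := fun j => x j + 2 * (n j : ℝ) - τ * aV j)
    (p2 := fun j => x j + 2 * (n j : ℝ) - (τ + 2 * h) * aV j)
    (t1 := -h) (t2 := -τ - 4 * h) rfl (by rw [g1]; ring) (by funext j; ring) (by rw [g2]; ring)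
  rw [e]
  refine Prod.ext ?_ rfl
  funext j
  simp only
  ring

/-! ### Back to Euclidean coordinates -/

lemma q_bounds {β : ℝ} (hβ : 20 < β) :
    0 < (2 : ℝ) ^ (-(β + 1)) ∧ (2 : ℝ) ^ (-(β + 1)) < 1 / 2 ^ 21 := by
  refine ⟨by positivity, ?_⟩
  have h : (2 : ℝ) ^ (-(β + 1)) < (2 : ℝ) ^ (-21 : ℝ) :=
    Real.rpow_lt_rpow_of_exponent_lt (by norm_num) (by linarith)
  refine h.trans_le (le_of_eq ?_)
  rw [Real.rpow_neg (by norm_num), one_div]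
  congr 1
  exact_mod_cast Real.rpow_natCast (2 : ℝ) 21

lemma Fhat_eq {q : ℝ} {m : ℕ} {x y : E4} (h : FF q m (eV x) = eV y) : Fhat q m x = y := by
  unfold Fhat
  rw [h, ContinuousLinearEquiv.symm_apply_apply]

lemma tr_cast (n₁ n₂ n₃ : ℤ) (j : Fin 3) :
    tr n₁ n₂ n₃ j.castSucc = 2 * ((![n₁, n₂, n₃] : Fin 3 → ℤ) j : ℝ) := by
  fin_cases j <;> simp [tr]

lemma tr_three (n₁ n₂ n₃ : ℤ) : tr n₁ n₂ n₃ 3 = 0 := by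
  simp [tr]

lemma eV_tr (n₁ n₂ n₃ : ℤ) :
    eV (tr n₁ n₂ n₃) = (fun j => 2 * ((![n₁, n₂, n₃] : Fin 3 → ℤ) j : ℝ), 0) := by
  rw [eV_apply]
  refine Prod.ext ?_ (tr_three _ _ _)
  funext j
  exact tr_cast _ _ _ j

lemma eV_reflect (x : E4) : eV (reflect x) = ((eV x).1, -(eV x).2) := by
  rw [eV_apply, eV_apply]
  refine Prod.ext ?_ ?_
  · funext j
    fin_cases j <;> simp [reflect]
  · simp [reflect]
    ring

lemma Fhat_id (q : ℝ) (m : ℕ) (x : E4)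
    (h : 14 ≤ |x 3| ∨ ∃ j : Fin 3, 2 * (m : ℝ) + 5 ≤ |x j.castSucc|) : Fhat q m x = x := by
  apply Fhat_eq
  rcases le_or_gt 14 |x 3| with h3 | h3
  · exact FF_id_t q m h3
  · rcases h with h | ⟨j, h⟩
    · linarith
    · exact FF_id_p q m j h h3.le

lemma mem_interior_of_strict (m : ℕ) (x : E4)
    (h : ¬ (14 ≤ |x 3| ∨ ∃ j : Fin 3, 2 * (m : ℝ) + 5 ≤ |x j.castSucc|)) :
    x ∈ interior (Rbox m 13) := by
  push Not at h
  obtain ⟨h3, hj⟩ := h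
  rw [mem_interior]
  refine ⟨{y : E4 | (|y 0| < 2 * (m : ℝ) + 5 ∧ |y 1| < 2 * (m : ℝ) + 5) ∧
    |y 2| < 2 * (m : ℝ) + 5 ∧ |y 3| < 14}, ?_, ?_, ?_⟩
  · rintro y ⟨⟨a, b⟩, c, d⟩
    exact ⟨a.le, b.le, c.le, d.le.trans (by norm_num)⟩
  · have ho : ∀ (i : Fin 4) (B : ℝ), IsOpen {y : E4 | |y i| < B} := fun i B =>
      isOpen_lt (by fun_prop) continuous_const
    exact ((ho 0 _).inter (ho 1 _)).inter ((ho 2 _).inter (ho 3 _))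
  · exact ⟨⟨hj 0, hj 1⟩, hj 2, h3⟩

lemma Fhat_bijOn (q : ℝ) (m : ℕ) (hi : Function.Injective (Fhat q m))
    (hs : Function.Surjective (Fhat q m)) : Set.BijOn (Fhat q m) (Rbox m 13) (Rbox m 13) := by
  have hout : ∀ x, x ∉ Rbox m 13 → Fhat q m x = x := by
    intro x hx
    by_contra hne
    exact hx (interior_subset (mem_interior_of_strict m x fun h => hne (Fhat_id q m x h)))
  refine ⟨?_, hi.injOn, ?_⟩
  · intro x hx
    by_contra hne
    have := hi (hout _ hne)
    rw [this] at hne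
    exact hne hx
  · intro y hy
    obtain ⟨x, rfl⟩ := hs y
    refine ⟨x, ?_, rfl⟩
    by_contra hne
    rw [hout x hne] at hy
    exact hne hy

lemma phi_KBm {β q : ℝ} (hq0 : 0 < q) (hq1 : q < 1 / 2 ^ 21) (hq : (2 : ℝ) ^ (-(β + 1)) = q)
    {m : ℕ} {x : E4} (hx : x ∈ KBm β m) (h3 : |x 3| ≤ 3) :
    phi q (fun j => theta m ((eV x).1 j - (eV x).2 * aV j)) = (eV x).2 := by
  obtain ⟨n₁, n₂, n₃, hn₁, hn₂, hn₃, c, i, t, hc, rfl⟩ := hx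
  rw [rB_eq, hq] at hc
  set x : E4 := c + tr n₁ n₂ n₃ + t • EuclideanSpace.single i (1 : ℝ) with hxd
  have hxj : ∀ j : Fin 3, j.castSucc ≠ i →
      x j.castSucc = c j.castSucc + 2 * ((![n₁, n₂, n₃] : Fin 3 → ℤ) j : ℝ) := by
    intro j hj
    rw [hxd, PiLp.add_apply, PiLp.add_apply, tr_cast]
    simp [hj]
  have hx3 : i ≠ 3 → x 3 = c 3 := by
    intro hi
    rw [hxd, PiLp.add_apply, PiLp.add_apply, tr_three]
    simp [hi.symm]
  clear_value x
  have hn : ∀ j, |(![n₁, n₂, n₃] : Fin 3 → ℤ) j| ≤ (m : ℤ) := by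
    intro j
    fin_cases j
    · exact hn₁
    · exact hn₂
    · exact hn₃
  rw [eV_apply]
  simp only
  let z : VV := (fun j => if j.castSucc = i then
    theta m (x j.castSucc - x 3 * aV j) + x 3 * aV j else c j.castSucc, x 3)
  have hz : z ∈ K0 q := by
    have hz1 : ∀ j : Fin 3, j.castSucc ≠ i → z.1 j ∈ CC q := by
      intro j hj
      simp only [z, hj, if_false]
      exact hc _
    rcases Fin.eq_castSucc_or_eq_last i with ⟨k, rfl⟩ | rfl
    · refine Or.inr ⟨k, fun j hj => hz1 j fun h => hj (Fin.castSucc_injective _ h), ?_⟩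
      have : z.2 = c 3 := hx3 (Fin.castSucc_lt_last k).ne
      rw [this]
      exact hc 3
    · exact Or.inl fun j => hz1 j (Fin.castSucc_lt_last j).ne
  have hP : (fun j : Fin 3 => theta m (x j.castSucc - x 3 * aV j)) = PV z := by
    funext j
    simp only [PV, z, Pi.sub_apply, Pi.smul_apply, smul_eq_mul]
    by_cases hj : j.castSucc = i
    · rw [if_pos hj]; ring
    · rw [if_neg hj, hxj j hj]
      have hb : |c j.castSucc - x 3 * aV j| ≤ 6 / 10 := by
        have h1 := aux_mul j h3
        have h2 := CC_bound hq1 (hc j.castSucc)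
        have h4 := abs_sub (c j.castSucc) (x 3 * aV j)
        linarith
      rw [add_sub_right_comm, theta_shift m (by linarith) (hn j), bump_eq hb]
  rw [hP, phi_PV hq0 hq1 hz]

lemma eV_line_three (y : E4) (s : ℝ) :
    eV (y + s • EuclideanSpace.single 3 (1 : ℝ)) = ((eV y).1, (eV y).2 + s) := by
  rw [eV_apply, eV_apply]
  refine Prod.ext ?_ ?_
  · funext j
    fin_cases j <;> simp
  · simp

lemma hasLineDeriv_of_eventually {F : E4 → E4} {y v w : E4}
    (h : ∀ᶠ s : ℝ in nhds 0, F (y + s • v) = F y + s • w) : HasLineDerivAt ℝ F w y v := by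
  unfold HasLineDerivAt
  have h1 : HasDerivAt (fun s : ℝ => F y + s • w) w 0 := by
    simpa using ((hasDerivAt_id (0 : ℝ)).smul_const w).const_add (F y)
  exact h1.congr_of_eventuallyEq h

lemma small_eventually : ∀ᶠ s : ℝ in nhds 0, |s| < 1 / 100 := by
  have : Metric.ball (0 : ℝ) (1 / 100) ∈ nhds (0 : ℝ) := Metric.ball_mem_nhds _ (by norm_num)
  filter_upwards [this] with s hs
  simpa using hs

lemma Fhat_line_tube {q : ℝ} (hq0 : 0 < q) (hq1 : q < 1 / 2 ^ 21) (m : ℕ) (x : E4)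
    (hx : ∀ j : Fin 3, x j.castSucc ∈ cantorU1 (fun k => q ^ k) 2) {n₁ n₂ n₃ : ℤ}
    (hn : ∀ j, |(![n₁, n₂, n₃] : Fin 3 → ℤ) j| ≤ (m : ℤ)) (h3 : |x 3| ∈ Set.Ioc (1 : ℝ) 3) :
    HasLineDerivAt ℝ (Fhat q m) (-(EuclideanSpace.single 3 (1 : ℝ)))
      (x + tr n₁ n₂ n₃) (EuclideanSpace.single 3 (1 : ℝ)) := by
  obtain ⟨h, hF⟩ := FF_tube hq0 hq1 m (fun j => x j.castSucc) hx hn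
  have hy : eV (x + tr n₁ n₂ n₃) =
      (fun j : Fin 3 => x j.castSucc + 2 * ((![n₁, n₂, n₃] : Fin 3 → ℤ) j : ℝ), x 3) := by
    rw [map_add, eV_tr, eV_apply]
    refine Prod.ext rfl ?_
    simp
  apply hasLineDeriv_of_eventually
  filter_upwards [small_eventually] with s hs
  have e0 := hF (x 3) (by linarith [h3.1]) (by linarith [h3.2])
  have e1 := hF (x 3 + s)
    (by
      have := abs_sub_abs_le_abs_sub (x 3) (-s)
      rw [abs_neg, sub_neg_eq_add] at this
      linarith [h3.1])
    (by linarith [abs_add_le (x 3) s, h3.2])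
  apply Fhat_eq
  rw [eV_line_three, hy, e1, smul_neg, ← neg_smul, eV_line_three, Fhat,
    ContinuousLinearEquiv.apply_symm_apply, hy, e0]
  refine Prod.ext rfl ?_
  simp only
  ring

lemma eV_line (y : E4) (j : Fin 3) (s : ℝ) :
    eV (y + s • EuclideanSpace.single j.castSucc (1 : ℝ)) =
      eV y + (s • Pi.single j (1 : ℝ), 0) := by
  rw [eV_apply, eV_apply]
  refine Prod.ext ?_ ?_
  · funext k
    fin_cases j <;> fin_cases k <;> simp
  · fin_cases j <;> simp

lemma Fhat_line_side (q : ℝ) (m : ℕ) {y : E4} {j : Fin 3}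
    (hj : |y j.castSucc| ∈ Set.Icc (2 * (m : ℝ) + 1) (2 * (m : ℝ) + 3))
    (hk : ∀ k : Fin 3, k ≠ j → |y k.castSucc| ≤ 2 * (m : ℝ) + 3) (h3 : |y 3| ≤ 1) :
    HasLineDerivAt ℝ (Fhat q m) (EuclideanSpace.single j.castSucc (1 : ℝ))
      y (EuclideanSpace.single j.castSucc (1 : ℝ)) := by
  apply hasLineDeriv_of_eventually
  filter_upwards [small_eventually] with s hs
  apply Fhat_eq
  have hall : ∀ k : Fin 3, |y k.castSucc| ≤ 2 * (m : ℝ) + 3 := by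
    intro k
    by_cases h : k = j
    · rw [h]; exact hj.2
    · exact hk k h
  have hsk : ∀ k : Fin 3, |(s • (Pi.single j (1 : ℝ) : Fin 3 → ℝ)) k| ≤ 1 / 100 := by
    intro k
    by_cases h : k = j
    · subst h; simp; linarith
    · simp [h]
  rw [eV_line, eV_line, Fhat, ContinuousLinearEquiv.apply_symm_apply]
  rw [FF_side q m (v := eV y) j h3 (by simp)]
  · congr 1
    abel
  · intro k; exact (hall k).trans (by linarith)
  · intro k
    have h1 := abs_add_le ((eV y).1 k) ((s • (Pi.single j (1 : ℝ) : Fin 3 → ℝ)) k)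
    have h2 : |(eV y).1 k| ≤ 2 * (m : ℝ) + 3 := hall k
    rw [Prod.fst_add, Pi.add_apply]
    linarith [hsk k]
  · intro k h
    simp [h]
  · have : 2 * (m : ℝ) + 1 ≤ |(eV y).1 j| := hj.1
    linarith
  · have h1 := abs_sub_abs_le_abs_sub ((eV y).1 j) (-(s • (Pi.single j (1 : ℝ) : Fin 3 → ℝ)) j)
    rw [abs_neg, sub_neg_eq_add] at h1
    have h2 : 2 * (m : ℝ) + 1 ≤ |(eV y).1 j| := hj.1
    rw [Prod.fst_add, Pi.add_apply]
    linarith [hsk j]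

lemma side_bound {q : ℝ} (hq1 : q < 1 / 2 ^ 21) {x y : ℝ} {m : ℕ} {n : ℤ}
    (hx : x ∈ cantorU1 (fun k => q ^ k) 1) (hn : |n| ≤ (m : ℤ)) (hy : y = x + 2 * (n : ℝ)) :
    |y| ≤ 2 * (m : ℝ) + 3 := by
  have h1 := U1_bound hq1 hx
  have h2 : |(n : ℝ)| ≤ m := by exact_mod_cast hn
  have h3 := abs_add_le x (2 * (n : ℝ))
  rw [abs_mul, abs_two] at h3
  rw [hy]
  linarith

/-- Theorem 4.2: existence of the bi-Lipschitz map `F̂_{β,m}` of `R_{m,13}` onto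
itself which is the identity on `∂R_{m,13}`, equals the reflection on the lines
through the Cantor plates, is periodic, and has the directional derivative
identities (4.6)–(4.9) almost everywhere. -/
theorem exists_reflection_map :
    ∃ β₀ : ℝ, 2 < β₀ ∧ ∀ β : ℝ, β₀ < β → ∃ L : ℝ, 1 ≤ L ∧ ∀ m : ℕ,
      ∃ Fh : E4 → E4,
        Set.BijOn Fh (Rbox m 13) (Rbox m 13) ∧
        (∀ x ∈ Rbox m 13, ∀ y ∈ Rbox m 13,
          L⁻¹ * dist x y ≤ dist (Fh x) (Fh y) ∧ dist (Fh x) (Fh y) ≤ L * dist x y) ∧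
        (∀ x ∈ Rbox m 13 \ interior (Rbox m 13), Fh x = x) ∧
        (∀ x ∈ KBm β m,
          |x 0| ≤ 2 * (m : ℝ) + 3 → |x 1| ≤ 2 * (m : ℝ) + 3 → |x 2| ≤ 2 * (m : ℝ) + 3 →
          |x 3| ≤ 3 → Fh x = reflect x) ∧
        (∀ n₁ n₂ n₃ : ℤ, |n₁| ≤ (m : ℤ) → |n₂| ≤ (m : ℤ) → |n₃| ≤ (m : ℤ) →
          (∀ x ∈ unitCubeO, Fh (x + tr n₁ n₂ n₃) = Fh x + tr n₁ n₂ n₃) ∧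
          (∀ᵐ x : E4,
            (x 0 ∈ cantorU1 (rB β) 2 ∧ x 1 ∈ cantorU1 (rB β) 2 ∧
              x 2 ∈ cantorU1 (rB β) 2 ∧ |x 3| ∈ Set.Ioc (1 : ℝ) 3) →
            HasLineDerivAt ℝ Fh (-(EuclideanSpace.single 3 (1 : ℝ)))
              (x + tr n₁ n₂ n₃) (EuclideanSpace.single 3 (1 : ℝ))) ∧
          (∀ᵐ x : E4,
            (|x 0| ∈ Set.Icc (2 * (m : ℝ) + 1) (2 * (m : ℝ) + 3) ∧
              x 1 ∈ cantorU1 (rB β) 1 ∧ x 2 ∈ cantorU1 (rB β) 1 ∧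
              x 3 ∈ cantorU1 (rB β) 1) →
            HasLineDerivAt ℝ Fh (EuclideanSpace.single 0 (1 : ℝ))
              (x + tr 0 n₂ n₃) (EuclideanSpace.single 0 (1 : ℝ))) ∧
          (∀ᵐ x : E4,
            (x 0 ∈ cantorU1 (rB β) 1 ∧
              |x 1| ∈ Set.Icc (2 * (m : ℝ) + 1) (2 * (m : ℝ) + 3) ∧
              x 2 ∈ cantorU1 (rB β) 1 ∧ x 3 ∈ cantorU1 (rB β) 1) →
            HasLineDerivAt ℝ Fh (EuclideanSpace.single 1 (1 : ℝ))
              (x + tr n₁ 0 n₃) (EuclideanSpace.single 1 (1 : ℝ))) ∧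
          (∀ᵐ x : E4,
            (x 0 ∈ cantorU1 (rB β) 1 ∧ x 1 ∈ cantorU1 (rB β) 1 ∧
              |x 2| ∈ Set.Icc (2 * (m : ℝ) + 1) (2 * (m : ℝ) + 3) ∧
              x 3 ∈ cantorU1 (rB β) 1) →
            HasLineDerivAt ℝ Fh (EuclideanSpace.single 2 (1 : ℝ))
              (x + tr n₁ n₂ 0) (EuclideanSpace.single 2 (1 : ℝ)))) := by
  refine ⟨20, by norm_num, fun β hβ => ?_⟩
  obtain ⟨K, hK⟩ := Fhat_exists_lip
  obtain ⟨hq0, hq1⟩ := q_bounds hβ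
  rw [rB_eq]
  generalize hq : (2 : ℝ) ^ (-(β + 1)) = q at hq0 hq1 ⊢
  have hL : (1 : ℝ) ≤ max 1 (K : ℝ) := le_max_left _ _
  refine ⟨max 1 (K : ℝ), hL, fun m => ⟨Fhat q m, ?_, ?_, ?_, ?_, ?_⟩⟩
  · exact Fhat_bijOn q m (hK q hq0 hq1 m).2.1.injective (hK q hq0 hq1 m).2.2
  · intro x _ y _
    obtain ⟨h1, h2, _⟩ := hK q hq0 hq1 m
    have hL0 : (0 : ℝ) < max 1 (K : ℝ) := by linarith
    constructor
    · rw [inv_mul_le_iff₀ hL0]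
      refine (h2.le_mul_dist x y).trans ?_
      gcongr
      exact le_max_right _ _
    · refine (h1.dist_le_mul x y).trans ?_
      gcongr
      exact le_max_right _ _
  · rintro x ⟨hx1, hx2⟩
    by_contra hne
    exact hx2 (mem_interior_of_strict m x fun h => hne (Fhat_id q m x h))
  · intro x hx h0 h1 h2 h3
    apply Fhat_eq
    have hv : ∀ j : Fin 3, |(eV x).1 j| ≤ 2 * (m : ℝ) + 3 := by
      intro j
      fin_cases j
      · exact h0
      · exact h1
      · exact h2
    rw [FF_reflect q m h3 hv (phi_KBm hq0 hq1 hq hx h3), eV_reflect]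
  · intro n₁ n₂ n₃ hn₁ hn₂ hn₃
    have hn : ∀ j, |(![n₁, n₂, n₃] : Fin 3 → ℤ) j| ≤ (m : ℤ) := by
      intro j
      fin_cases j
      · exact hn₁
      · exact hn₂
      · exact hn₃
    have hm0 : |(0 : ℤ)| ≤ (m : ℤ) := by simp
    refine ⟨?_, ?_, ?_, ?_, ?_⟩
    · intro x hx
      apply Fhat_eq
      rw [map_add, map_add, eV_tr, FF_shift q m _ _ hn, Fhat, ContinuousLinearEquiv.apply_symm_apply]
      · exact abs_le.mpr ⟨(hx 3).1.le, (hx 3).2.le⟩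
      · intro j
        exact abs_le.mpr ⟨(hx j.castSucc).1.le, (hx j.castSucc).2.le⟩
    · refine ae_of_all _ ?_
      rintro x ⟨h0, h1, h2, h3⟩
      refine Fhat_line_tube hq0 hq1 m x ?_ hn h3
      intro j
      fin_cases j
      · exact h0
      · exact h1
      · exact h2
    · refine ae_of_all _ ?_
      rintro x ⟨h0, h1, h2, h3⟩
      refine Fhat_line_side q m (j := 0) ?_ ?_ ?_
      · simpa [tr] using h0
      · intro k hk
        fin_cases k
        · exact absurd rfl hk
        · exact side_bound hq1 h1 hn₂ (by simp [tr])
        · exact side_bound hq1 h2 hn₃ (by simp [tr])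
      · have := U1_bound hq1 h3
        simp [tr]
        linarith
    · refine ae_of_all _ ?_
      rintro x ⟨h0, h1, h2, h3⟩
      refine Fhat_line_side q m (j := 1) ?_ ?_ ?_
      · simpa [tr] using h1
      · intro k hk
        fin_cases k
        · exact side_bound hq1 h0 hn₁ (by simp [tr])
        · exact absurd rfl hk
        · exact side_bound hq1 h2 hn₃ (by simp [tr])
      · have := U1_bound hq1 h3
        simp [tr]
        linarith
    · refine ae_of_all _ ?_
      rintro x ⟨h0, h1, h2, h3⟩
      refine Fhat_line_side q m (j := 2) ?_ ?_ ?_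
      · simpa [tr] using h2
      · intro k hk
        fin_cases k
        · exact side_bound hq1 h0 hn₁ (by simp [tr])
        · exact side_bound hq1 h1 hn₂ (by simp [tr])
        · exact absurd rfl hk
      · have := U1_bound hq1 h3
        simp [tr]
        linarith
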